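/- Let S be a Polish space and c : S × S → [0,∞] a lower semicontinuous map. For Borel probability measures μ, ν on S let ℓ(μ,ν) := inf_{π ∈ D(μ,ν)} ∫ c dπ, and let K(μ,ν) := { π ∈ D(μ,ν) : ∫ c dπ = ℓ(μ,ν) }. Then each K(μ,ν) is a nonempty compact subset of P(S × S), and there exists a map (μ,ν) ↦ λ_{μ,ν} from P(S) × P(S) to P(S × S), measurable with respect to the universal completion of the Borel σ-algebra of P(S) × P(S), such that λ_{μ,ν} ∈ K(μ,ν) for all μ, ν; i.e. λ_{μ,ν} is a coupling of μ and ν attaining the infimum ℓ(μ,ν). -/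

import Mathlib

open MeasureTheory ProbabilityTheory ENNReal Set

noncomputable section

/-- The `μ`-completion of the σ-algebra `m`. -/
def muCompletion {α : Type*} (m : MeasurableSpace α) (μ : @Measure α m) : MeasurableSpace α :=
  letI := m
  inferInstanceAs (MeasurableSpace (MeasureTheory.NullMeasurableSpace α μ))

/-- The universal completion of a σ-algebra: the intersection of the `μ`-completions
over all finite nonnegative measures `μ`. -/
def univCompletion {α : Type*} (m : MeasurableSpace α) : MeasurableSpace α :=
  ⨅ (μ : @Measure α m) (_ : @IsFiniteMeasure α m μ), muCompletion m μ

/-- `D(μ,ν)` as a set of probability measures (points of `P(S × S)`). -/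
def CouplingsP {S : Type*} [TopologicalSpace S] [MeasurableSpace S]
    (μ ν : ProbabilityMeasure S) : Set (ProbabilityMeasure (S × S)) :=
  {π | (π : Measure (S × S)).map Prod.fst = (μ : Measure S) ∧
    (π : Measure (S × S)).map Prod.snd = (ν : Measure S)}

/-- The optimal cost `ℓ(μ,ν) = inf_{π ∈ D(μ,ν)} ∫ c dπ`. -/
def optCost {S : Type*} [TopologicalSpace S] [MeasurableSpace S]
    (c : S × S → ℝ≥0∞) (μ ν : ProbabilityMeasure S) : ℝ≥0∞ :=
  ⨅ π ∈ CouplingsP μ ν, ∫⁻ q, c q ∂(π : Measure (S × S))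

/-- `K(μ,ν)`: the set of optimal couplings of `μ` and `ν`. -/
def OptCouplings {S : Type*} [TopologicalSpace S] [MeasurableSpace S]
    (c : S × S → ℝ≥0∞) (μ ν : ProbabilityMeasure S) : Set (ProbabilityMeasure (S × S)) :=
  {π ∈ CouplingsP μ ν | ∫⁻ q, c q ∂(π : Measure (S × S)) = optCost c μ ν}

section Helpers

open Filter Topology TopologicalSpace

lemma borel_le_univCompletion {α : Type*} (m : MeasurableSpace α) : m ≤ univCompletion m := by
  refine le_iInf fun μ => le_iInf fun _ => ?_
  intro s hs
  exact (MeasurableSet.nullMeasurableSet (μ := μ) hs)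

/-- The successive minimization sets. -/
def minSets {X Y : Type*} (K : X → Set Y) (f : ℕ → Y → ℝ≥0∞) : ℕ → X → Set Y
  | 0 => K
  | n + 1 => fun x => {y ∈ minSets K f n x | ∀ z ∈ minSets K f n x, f n y ≤ f n z}

lemma lsc_exists_min {Y : Type*} [TopologicalSpace Y] {K : Set Y} (hK : IsCompact K)
    (hn : K.Nonempty) {f : Y → ℝ≥0∞} (hf : LowerSemicontinuous f) :
    ∃ y ∈ K, ∀ z ∈ K, f y ≤ f z := by
  obtain ⟨y, hy, h⟩ := LowerSemicontinuousOn.exists_isMinOn hn hK (hf.lowerSemicontinuousOn K)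
  exact ⟨y, hy, fun z hz => h hz⟩

lemma minStep_eq {Y : Type*} {K : Set Y} (f : Y → ℝ≥0∞) {y₀ : Y} (h0 : y₀ ∈ K)
    (hmin : ∀ z ∈ K, f y₀ ≤ f z) :
    {y ∈ K | ∀ z ∈ K, f y ≤ f z} = K ∩ f ⁻¹' Set.Iic (f y₀) := by
  ext y
  constructor
  · rintro ⟨hy, h⟩
    exact ⟨hy, h _ h0⟩
  · rintro ⟨hy, h⟩
    exact ⟨hy, fun z hz => le_trans h (hmin z hz)⟩

lemma minStep_compact {Y : Type*} [TopologicalSpace Y] {K : Set Y} (hK : IsCompact K)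
    (hn : K.Nonempty) {f : Y → ℝ≥0∞} (hf : LowerSemicontinuous f) :
    {y ∈ K | ∀ z ∈ K, f y ≤ f z}.Nonempty ∧ IsCompact {y ∈ K | ∀ z ∈ K, f y ≤ f z} := by
  obtain ⟨y, hy, h⟩ := lsc_exists_min hK hn hf
  refine ⟨⟨y, hy, h⟩, ?_⟩
  rw [minStep_eq f hy h]
  exact hK.inter_right (hf.isClosed_preimage _)

lemma minSets_compact {X Y : Type*} [TopologicalSpace Y] {K : X → Set Y} {f : ℕ → Y → ℝ≥0∞}
    (hK : ∀ x, (K x).Nonempty ∧ IsCompact (K x)) (hf : ∀ n, LowerSemicontinuous (f n))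
    (n : ℕ) (x : X) : (minSets K f n x).Nonempty ∧ IsCompact (minSets K f n x) := by
  induction n with
  | zero => exact hK x
  | succ n ih => exact minStep_compact ih.2 ih.1 (hf n)

/-- The infimum of a lower semicontinuous function over a measurable compact multifunction. -/
lemma measurable_inf {X Y : Type*} [MeasurableSpace X] [TopologicalSpace Y] {K : X → Set Y}
    (hK : ∀ x, IsCompact (K x)) {f : Y → ℝ≥0∞} (hf : LowerSemicontinuous f)
    (hm : ∀ C : Set Y, IsClosed C → MeasurableSet {x | (K x ∩ C).Nonempty})
    {C : Set Y} (hC : IsClosed C) :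
    Measurable (fun x => ⨅ y ∈ K x ∩ C, f y) := by
  refine measurable_of_Iic fun a => ?_
  by_cases ha : a = ⊤
  · subst ha
    simp
  have : (fun x => ⨅ y ∈ K x ∩ C, f y) ⁻¹' Set.Iic a
      = {x | (K x ∩ (C ∩ f ⁻¹' Set.Iic a)).Nonempty} := by
    ext x
    constructor
    · intro h
      have h' : ⨅ y ∈ K x ∩ C, f y ≤ a := h
      have hne : (K x ∩ C).Nonempty := by
        by_contra hne
        rw [Set.not_nonempty_iff_eq_empty] at hne
        rw [hne] at h'
        simp at h'
        exact ha h'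
      obtain ⟨y, hy, hmin⟩ := lsc_exists_min ((hK x).inter_right hC) hne hf
      refine ⟨y, hy.1, hy.2, ?_⟩
      exact le_trans (le_iInf₂ hmin) h'
    · rintro ⟨y, hy, hyC, hya⟩
      have hmem : y ∈ K x ∩ C := ⟨hy, hyC⟩
      have h1 : ⨅ y ∈ K x ∩ C, f y ≤ f y := iInf₂_le y hmem
      exact h1.trans hya
  rw [this]
  exact hm _ (hC.inter (hf.isClosed_preimage _))

lemma minSets_measurable {X Y : Type*} [MeasurableSpace X] [TopologicalSpace Y] {K : X → Set Y}
    {f : ℕ → Y → ℝ≥0∞}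
    (hK : ∀ x, (K x).Nonempty ∧ IsCompact (K x)) (hf : ∀ n, LowerSemicontinuous (f n))
    (hm : ∀ C : Set Y, IsClosed C → MeasurableSet {x | (K x ∩ C).Nonempty})
    (n : ℕ) : ∀ C : Set Y, IsClosed C → MeasurableSet {x | (minSets K f n x ∩ C).Nonempty} := by
  induction n with
  | zero => exact hm
  | succ n ih =>
    intro C hC
    have hc := fun x => minSets_compact hK hf n x
    have m1 := measurable_inf (fun x => (hc x).2) (hf n) ih hC
    have m2 := measurable_inf (fun x => (hc x).2) (hf n) ih isClosed_univ
    have : {x | (minSets K f (n + 1) x ∩ C).Nonempty} =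
        {x | (minSets K f n x ∩ C).Nonempty} ∩
        {x | (⨅ y ∈ minSets K f n x ∩ C, f n y) ≤ ⨅ y ∈ minSets K f n x ∩ Set.univ, f n y} := by
      ext x
      constructor
      · rintro ⟨y, ⟨hy, hmin⟩, hyC⟩
        refine ⟨⟨y, hy, hyC⟩, ?_⟩
        have hmem : y ∈ minSets K f n x ∩ C := ⟨hy, hyC⟩
        have h1 : ⨅ y ∈ minSets K f n x ∩ C, f n y ≤ f n y := iInf₂_le y hmem
        change (⨅ y ∈ minSets K f n x ∩ C, f n y) ≤ ⨅ y ∈ minSets K f n x ∩ Set.univ, f n y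
        exact le_iInf₂ fun z hz => h1.trans (hmin z hz.1)
      · rintro ⟨hne, hle⟩
        obtain ⟨y, hy, hmin⟩ := lsc_exists_min ((hc x).2.inter_right hC) hne (hf n)
        refine ⟨y, ⟨hy.1, fun z hz => ?_⟩, hy.2⟩
        calc f n y ≤ ⨅ y ∈ minSets K f n x ∩ C, f n y := le_iInf₂ hmin
          _ ≤ _ := hle
          _ ≤ f n z := iInf₂_le z ⟨hz, Set.mem_univ _⟩
    rw [this]
    exact (ih C hC).inter (measurableSet_le m1 m2)

/-- Abstract measurable selection by successive minimization. -/
lemma exists_selection {X Y : Type*} [MeasurableSpace X] [TopologicalSpace Y] [T2Space Y]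
    {K : X → Set Y} {f : ℕ → Y → ℝ≥0∞}
    (hK : ∀ x, (K x).Nonempty ∧ IsCompact (K x)) (hf : ∀ n, LowerSemicontinuous (f n))
    (hm : ∀ C : Set Y, IsClosed C → MeasurableSet {x | (K x ∩ C).Nonempty})
    (hsep : ∀ y z : Y, (∀ n, f n y = f n z) → y = z) :
    ∃ g : X → Y, @Measurable X Y _ (borel Y) g ∧
      ∀ x, g x ∈ K x ∧ ∀ z ∈ K x, f 0 (g x) ≤ f 0 z := by
  have hc := fun n x => minSets_compact hK hf n x
  have hanti : ∀ n x, minSets K f (n + 1) x ⊆ minSets K f n x := fun n x y hy => hy.1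
  have key : ∀ x (C : Set Y), IsClosed C → (∀ n, (minSets K f n x ∩ C).Nonempty) →
      (⋂ n, (minSets K f n x ∩ C)).Nonempty := by
    intro x C hC h
    refine IsCompact.nonempty_iInter_of_sequence_nonempty_isCompact_isClosed _
      (fun n => Set.inter_subset_inter_left _ (hanti n x)) h
      ((hc 0 x).2.inter_right hC) (fun n => (hc n x).2.isClosed.inter hC)
  have hex : ∀ x, ∃ y, ∀ n, y ∈ minSets K f n x := by
    intro x
    obtain ⟨y, hy⟩ := key x Set.univ isClosed_univ (fun n => by simpa using (hc n x).1)
    exact ⟨y, fun n => (Set.mem_iInter.1 hy n).1⟩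
  choose g hg using hex
  have huniq : ∀ x y, (∀ n, y ∈ minSets K f n x) → y = g x := by
    intro x y hy
    refine hsep _ _ fun n => le_antisymm ?_ ?_
    · exact (hy (n + 1)).2 _ (hg x n)
    · exact (hg x (n + 1)).2 _ (hy n)
  refine ⟨g, ?_, fun x => ⟨hg x 0, (hg x 1).2⟩⟩
  letI : MeasurableSpace Y := borel Y
  haveI : BorelSpace Y := ⟨rfl⟩
  refine measurable_of_isClosed fun C hC => ?_
  have : g ⁻¹' C = ⋂ n, {x | (minSets K f n x ∩ C).Nonempty} := by
    ext x
    rw [Set.mem_iInter]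
    constructor
    · intro h n
      exact ⟨g x, hg x n, h⟩
    · intro h
      obtain ⟨y, hy⟩ := key x C hC h
      rw [Set.mem_iInter] at hy
      have := huniq x y (fun n => (hy n).1)
      rw [Set.mem_preimage, ← this]
      exact (hy 0).2
  rw [this]
  exact MeasurableSet.iInter fun n => minSets_measurable hK hf hm n C hC

variable {Ω : Type*} [TopologicalSpace Ω] [PolishSpace Ω] [MeasurableSpace Ω] [BorelSpace Ω]

lemma lsc_lintegral_real {f : Ω → ℝ} (hf : LowerSemicontinuous f) (h0 : ∀ x, 0 ≤ f x) :
    LowerSemicontinuous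
      (fun π : ProbabilityMeasure Ω => ∫⁻ q, ENNReal.ofReal (f q) ∂(π : Measure Ω)) := by
  have hlay : ∀ π : ProbabilityMeasure Ω, ∫⁻ q, ENNReal.ofReal (f q) ∂(π : Measure Ω)
      = ∫⁻ t in Set.Ioi (0 : ℝ), (π : Measure Ω) {a | t < f a} := fun π =>
    lintegral_eq_lintegral_meas_lt _ (Eventually.of_forall h0) hf.measurable.aemeasurable
  rw [lowerSemicontinuous_iff_isClosed_preimage]
  intro a
  refine IsSeqClosed.isClosed fun u π hu hlim => ?_
  change ∫⁻ q, ENNReal.ofReal (f q) ∂(π : Measure Ω) ≤ a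
  rw [hlay]
  calc ∫⁻ t in Set.Ioi (0 : ℝ), (π : Measure Ω) {a | t < f a}
      ≤ ∫⁻ t in Set.Ioi (0 : ℝ), liminf (fun n => (u n : Measure Ω) {a | t < f a}) atTop :=
        lintegral_mono fun t =>
          ProbabilityMeasure.le_liminf_measure_open_of_tendsto hlim (hf.isOpen_preimage t)
    _ ≤ liminf (fun n => ∫⁻ t in Set.Ioi (0 : ℝ), (u n : Measure Ω) {a | t < f a}) atTop := by
        refine lintegral_liminf_le fun n => ?_
        refine Antitone.measurable fun s t hst => measure_mono fun x hx => lt_of_le_of_lt hst hx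
    _ ≤ a := by
        refine le_trans (liminf_le_liminf (v := fun _ => a) (Eventually.of_forall fun n => ?_)) ?_
        · have : ∫⁻ q, ENNReal.ofReal (f q) ∂(u n : Measure Ω) ≤ a := hu n
          rwa [hlay] at this
        · simp

lemma lsc_lintegral {c : Ω → ℝ≥0∞} (hc : LowerSemicontinuous c) :
    LowerSemicontinuous (fun π : ProbabilityMeasure Ω => ∫⁻ q, c q ∂(π : Measure Ω)) := by
  have hsup : ∀ x, c x = ⨆ n : ℕ, min (c x) n := by
    intro x
    rw [← inf_iSup_eq, ENNReal.iSup_natCast, inf_top_eq]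
  have hcm : Measurable c := hc.measurable
  have h1 : ∀ π : ProbabilityMeasure Ω, ∫⁻ q, c q ∂(π : Measure Ω)
      = ⨆ n : ℕ, ∫⁻ q, ENNReal.ofReal (min (c q) n).toReal ∂(π : Measure Ω) := by
    intro π
    have h2 : ∀ (n : ℕ) q, ENNReal.ofReal (min (c q) n).toReal = min (c q) n := fun n q =>
      ENNReal.ofReal_toReal (ne_top_of_le_ne_top (ENNReal.natCast_ne_top n) (min_le_right _ _))
    simp_rw [h2]
    rw [← lintegral_iSup (fun n => hcm.min measurable_const)]
    · exact lintegral_congr hsup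
    · intro m n hmn x
      exact min_le_min le_rfl (by exact_mod_cast hmn)
  simp_rw [h1]
  refine lowerSemicontinuous_iSup fun n => lsc_lintegral_real ?_ (fun x => ENNReal.toReal_nonneg)
  have ht : ∀ q, min (c q) (n : ℝ≥0∞) ≠ ⊤ := fun q =>
    ne_top_of_le_ne_top (ENNReal.natCast_ne_top n) (min_le_right _ _)
  rw [lowerSemicontinuous_iff_isOpen_preimage]
  intro t
  rcases lt_or_ge t 0 with h | h
  · convert isOpen_univ
    ext q
    simp only [Set.mem_preimage, Set.mem_Ioi, Set.mem_univ, iff_true]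
    exact lt_of_lt_of_le h ENNReal.toReal_nonneg
  · have : (fun q => (min (c q) (n : ℝ≥0∞)).toReal) ⁻¹' Set.Ioi t
        = {q | ENNReal.ofReal t < c q ∧ ENNReal.ofReal t < n} := by
      ext q
      rw [Set.mem_preimage, Set.mem_Ioi, ← ENNReal.ofReal_lt_iff_lt_toReal h (ht q), lt_min_iff]
      rfl
    rw [this]
    exact (hc.isOpen_preimage _).inter isOpen_const

lemma exists_separating :
    ∃ U : ℕ → Set Ω, (∀ n, IsOpen (U n)) ∧ ∀ π ρ : ProbabilityMeasure Ω,
      (∀ n, (π : Measure Ω) (U n) = (ρ : Measure Ω) (U n)) → π = ρ := by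
  let B : Set (Set Ω) := (fun F => ⋂₀ F) '' {F | F.Finite ∧ F ⊆ countableBasis Ω}
  have hBc : B.Countable :=
    (Set.countable_ofPred_finite_subset (countable_countableBasis Ω)).image _
  have hBn : B.Nonempty := ⟨_, ⟨∅, ⟨Set.finite_empty, Set.empty_subset _⟩, rfl⟩⟩
  obtain ⟨U, hU⟩ := hBc.exists_eq_range hBn
  have hBo : ∀ s ∈ B, IsOpen s := by
    rintro s ⟨F, ⟨hF, hFs⟩, rfl⟩
    exact hF.isOpen_sInter fun t ht => isOpen_of_mem_countableBasis (hFs ht)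
  have hpi : IsPiSystem B := by
    rintro s ⟨F, ⟨hF, hFs⟩, rfl⟩ t ⟨G, ⟨hG, hGs⟩, rfl⟩ -
    exact ⟨F ∪ G, ⟨hF.union hG, Set.union_subset hFs hGs⟩, Set.sInter_union F G⟩
  have hgen : ‹MeasurableSpace Ω› = MeasurableSpace.generateFrom B := by
    apply le_antisymm
    · refine le_of_eq_of_le (BorelSpace.measurable_eq.trans
        (isBasis_countableBasis Ω).borel_eq_generateFrom) ?_
      refine MeasurableSpace.generateFrom_mono fun s hs => ?_
      exact ⟨{s}, ⟨Set.finite_singleton s, by simpa using hs⟩, by simp⟩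
    · exact MeasurableSpace.generateFrom_le fun s hs => (hBo s hs).measurableSet
  refine ⟨U, fun n => hBo _ (hU ▸ Set.mem_range_self n), fun π ρ h => ?_⟩
  apply Subtype.ext
  haveI : IsFiniteMeasure (π : Measure Ω) := inferInstance
  change (π : Measure Ω) = (ρ : Measure Ω)
  refine ext_of_generate_finite B hgen hpi (fun s hs => ?_) (by simp)
  rw [hU] at hs
  obtain ⟨n, rfl⟩ := hs
  exact h n

/-- The pair of marginals. -/
def margins (π : ProbabilityMeasure (Ω × Ω)) : ProbabilityMeasure Ω × ProbabilityMeasure Ω :=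
  (π.map measurable_fst.aemeasurable, π.map measurable_snd.aemeasurable)

lemma margins_preimage (μ ν : ProbabilityMeasure Ω) :
    CouplingsP μ ν = margins ⁻¹' {(μ, ν)} := by
  ext π
  simp only [Set.mem_preimage, Set.mem_singleton_iff, margins, Prod.mk.injEq]
  constructor
  · rintro ⟨h1, h2⟩
    exact ⟨Subtype.ext h1, Subtype.ext h2⟩
  · rintro ⟨h1, h2⟩
    exact ⟨congrArg Subtype.val h1, congrArg Subtype.val h2⟩

lemma continuous_margins : Continuous (margins (Ω := Ω)) :=
  (ProbabilityMeasure.continuous_map continuous_fst).prodMk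
    (ProbabilityMeasure.continuous_map continuous_snd)

lemma isCompact_margins_preimage {A : Set (ProbabilityMeasure Ω × ProbabilityMeasure Ω)}
    (hA : IsCompact A) : IsCompact (margins ⁻¹' A) := by
  letI := upgradeIsCompletelyMetrizable Ω
  have t1 : IsTightMeasureSet
      {((μ : ProbabilityMeasure Ω) : Measure Ω) | μ ∈ Prod.fst '' A} :=
    isTightMeasureSet_of_isCompact_closure (hA.image continuous_fst).closure
  have t2 : IsTightMeasureSet
      {((μ : ProbabilityMeasure Ω) : Measure Ω) | μ ∈ Prod.snd '' A} :=
    isTightMeasureSet_of_isCompact_closure (hA.image continuous_snd).closure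
  have ht : IsTightMeasureSet
      {((π : ProbabilityMeasure (Ω × Ω)) : Measure (Ω × Ω)) | π ∈ margins ⁻¹' A} := by
    refine IsTightMeasureSet.prodMk (t1.subset ?_) (t2.subset ?_)
    · rintro _ ⟨_, ⟨π, hπ, rfl⟩, rfl⟩
      exact ⟨(margins π).1, ⟨_, hπ, rfl⟩, rfl⟩
    · rintro _ ⟨_, ⟨π, hπ, rfl⟩, rfl⟩
      exact ⟨(margins π).2, ⟨_, hπ, rfl⟩, rfl⟩
  have := isCompact_closure_of_isTightMeasureSet ht
  rwa [(hA.isClosed.preimage continuous_margins).closure_eq] at this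

lemma isProperMap_margins : IsProperMap (margins (Ω := Ω)) :=
  isProperMap_iff_isCompact_preimage.2
    ⟨continuous_margins, fun _ hA => isCompact_margins_preimage hA⟩

lemma couplings_ok (μ ν : ProbabilityMeasure Ω) :
    (CouplingsP μ ν).Nonempty ∧ IsCompact (CouplingsP μ ν) := by
  constructor
  · refine ⟨⟨(μ : Measure Ω).prod (ν : Measure Ω), inferInstance⟩, ?_, ?_⟩
    · change ((μ : Measure Ω).prod (ν : Measure Ω)).map Prod.fst = _
      simp
    · change ((μ : Measure Ω).prod (ν : Measure Ω)).map Prod.snd = _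
      simp
  · rw [margins_preimage]
    exact isCompact_margins_preimage isCompact_singleton

lemma optCouplings_eq (c : Ω × Ω → ℝ≥0∞) (μ ν : ProbabilityMeasure Ω) :
    OptCouplings c μ ν = {π ∈ CouplingsP μ ν | ∀ ρ ∈ CouplingsP μ ν,
      ∫⁻ q, c q ∂(π : Measure (Ω × Ω)) ≤ ∫⁻ q, c q ∂(ρ : Measure (Ω × Ω))} := by
  ext π
  constructor
  · rintro ⟨h, h'⟩
    refine ⟨h, fun ρ hρ => ?_⟩
    rw [h']
    exact iInf₂_le ρ hρ
  · rintro ⟨h, h'⟩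
    exact ⟨h, le_antisymm (le_iInf₂ h') (iInf₂_le π h)⟩

end Helpers

/-- **Measurable selection of optimal couplings**: for a lower semicontinuous cost
`c : S × S → [0,∞]`, each set `K(μ,ν)` of optimal couplings is nonempty and compact in
`P(S × S)`, and there is a selection `(μ,ν) ↦ λ_{μ,ν} ∈ K(μ,ν)` which is measurable for
the universal completion of the Borel σ-algebra of `P(S) × P(S)`. -/
theorem measurable_selection_optimal_couplings
    {S : Type*} [TopologicalSpace S] [PolishSpace S] [MeasurableSpace S] [BorelSpace S]
    (c : S × S → ℝ≥0∞) (hc : LowerSemicontinuous c) :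
    (∀ μ ν : ProbabilityMeasure S,
      (OptCouplings c μ ν).Nonempty ∧ IsCompact (OptCouplings c μ ν)) ∧
    ∃ lam : ProbabilityMeasure S × ProbabilityMeasure S → ProbabilityMeasure (S × S),
      (@Measurable (ProbabilityMeasure S × ProbabilityMeasure S) (ProbabilityMeasure (S × S))
        (univCompletion (borel (ProbabilityMeasure S × ProbabilityMeasure S)))
        (borel (ProbabilityMeasure (S × S))) lam) ∧
      ∀ μ ν : ProbabilityMeasure S, lam (μ, ν) ∈ OptCouplings c μ ν := by
  constructor
  · intro μ ν
    rw [optCouplings_eq]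
    exact minStep_compact (couplings_ok μ ν).2 (couplings_ok μ ν).1 (lsc_lintegral hc)
  · obtain ⟨U, hUo, hU⟩ := exists_separating (Ω := S × S)
    let f : ℕ → ProbabilityMeasure (S × S) → ℝ≥0∞ := fun n =>
      Nat.casesOn n (fun π => ∫⁻ q, c q ∂(π : Measure (S × S)))
        (fun n π => ∫⁻ q, (U n).indicator (fun _ => 1) q ∂(π : Measure (S × S)))
    have hf : ∀ n, LowerSemicontinuous (f n) := by
      intro n
      cases n with
      | zero => exact lsc_lintegral hc
      | succ n => exact lsc_lintegral ((hUo n).lowerSemicontinuous_indicator zero_le_one)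
    letI : MeasurableSpace (ProbabilityMeasure S × ProbabilityMeasure S) := borel _
    haveI : BorelSpace (ProbabilityMeasure S × ProbabilityMeasure S) := ⟨rfl⟩
    obtain ⟨g, hg, hg'⟩ := exists_selection
      (K := fun p : ProbabilityMeasure S × ProbabilityMeasure S => CouplingsP p.1 p.2) (f := f)
      (fun p => couplings_ok p.1 p.2) hf
      (fun C hC => by
        have : {x : ProbabilityMeasure S × ProbabilityMeasure S |
            (CouplingsP x.1 x.2 ∩ C).Nonempty} = margins '' C := by
          ext x
          constructor
          · rintro ⟨π, h, hπ⟩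
            rw [margins_preimage] at h
            exact ⟨π, hπ, h⟩
          · rintro ⟨π, hπ, rfl⟩
            refine ⟨π, ?_, hπ⟩
            rw [margins_preimage]
            rfl
        rw [this]
        exact (isProperMap_margins.isClosedMap C hC).measurableSet)
      (fun π ρ h => hU π ρ fun n => by
        have := h (n + 1)
        simpa [f, lintegral_indicator (hUo n).measurableSet] using this)
    refine ⟨g, hg.mono (borel_le_univCompletion _) le_rfl, fun μ ν => ?_⟩
    rw [optCouplings_eq]
    exact hg' (μ, ν)

end
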